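/- arXiv:2505.22321 — 2 statements merged into one kernel-verified Lean document; each statement's English description precedes it below -/
import Mathlib

section
/- Let {G, (Γ0, Γ1), (Γ̃0, Γ̃1)} be a generalized boundary triple for the adjoint pair {S, S̃} with core {T, T̃} of {S*, S̃*}. Then the set {(Γ0 f, Γ1 f) : f ∈ dom T} is dense in G × G, and likewise the set {(Γ̃0 g, Γ̃1 g) : g ∈ dom T̃} is dense in G × G. -/
/-!
On `ker Γ0` the Green identity reads `(T f, g) - (f, Tt g) = (Γ1 f, Γt0 g)`. If `b = Γt0 g` is
orthogonal to `Γ1 (ker Γ0)`, then the right-hand side vanishes, so `g` lies in the domain of the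
adjoint of `T` restricted to `ker Γ0`. This domain is contained in `ker Γt0`, so `b = 0`: the
subspace `Γ1 (ker Γ0)` is dense in `G`. Therefore the fibre of the range of `(Γ0, Γ1)` over each
point `Γ0 f`, being the translate `Γ1 f + Γ1 (ker Γ0)`, is dense as well, and these fibres sit over
a dense set of points. The Green identity is symmetric under exchanging its two sides, which gives
the second claim.
-/

open scoped ComplexInnerProductSpace

noncomputable section

/-- The inner product in the convention of the paper: linear in the *first* argument and
conjugate-linear in the second (the opposite of Mathlib's convention). -/
def pinner {E : Type*} [NormedAddCommGroup E] [InnerProductSpace ℂ E] (x y : E) : ℂ :=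
  ⟪y, x⟫

variable {H G : Type*}
  [NormedAddCommGroup H] [InnerProductSpace ℂ H] [CompleteSpace H]
  [NormedAddCommGroup G] [InnerProductSpace ℂ G] [CompleteSpace G]

/-- The restriction of a partially defined linear operator `T` in `H` to a submodule `p` of its
domain, viewed again as a partially defined linear operator in `H`. -/
def LinearPMap.restrictTo (T : H →ₗ.[ℂ] H) (p : Submodule ℂ T.domain) : H →ₗ.[ℂ] H where
  domain := p.map T.domain.subtype
  toFun := T.toFun ∘ₗ p.subtype ∘ₗ
    (Submodule.equivMapOfInjective T.domain.subtype (Submodule.injective_subtype _)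
      p).symm.toLinearMap

/-- `R` is the (everywhere defined, bounded) resolvent of the operator `A` at the point `lam`,
i.e. `R` is a two-sided inverse of `A - lam`. -/
def ResolventAt (A : H →ₗ.[ℂ] H) (lam : ℂ) (R : H →L[ℂ] H) : Prop :=
  (∀ x : A.domain, R (A x - lam • (x : H)) = (x : H)) ∧
  (∀ h : H, ∃ x : A.domain, (x : H) = R h ∧ A x - lam • (x : H) = h)

/-- `lam` belongs to the resolvent set of `A`: `A - lam` is a bijection of `dom A` onto `H`
with a bounded everywhere defined inverse. -/
def InResolventSet (A : H →ₗ.[ℂ] H) (lam : ℂ) : Prop :=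
  ∃ R : H →L[ℂ] H, ResolventAt A lam R

/-- `{G, (Γ0, Γ1), (Γt0, Γt1)}` is a generalized boundary triple for the adjoint pair `{S, St}`
with core `{T, Tt}` of `{S*, St*}`. -/
structure IsGeneralizedBoundaryTriple (S St T Tt : H →ₗ.[ℂ] H)
    (Γ0 Γ1 : T.domain →ₗ[ℂ] G) (Γt0 Γt1 : Tt.domain →ₗ[ℂ] G) : Prop where
  dense_S : Dense (S.domain : Set H)
  dense_St : Dense (St.domain : Set H)
  closed_S : S.IsClosed
  closed_St : St.IsClosed
  adjoint_pair : ∀ (f : S.domain) (g : St.domain),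
    pinner (S f) (g : H) = pinner (f : H) (St g)
  T_le : T ≤ S.adjoint
  Tt_le : Tt ≤ St.adjoint
  T_adjoint : T.adjoint = S
  Tt_adjoint : Tt.adjoint = St
  green : ∀ (f : T.domain) (g : Tt.domain),
    pinner (T f) (g : H) - pinner (f : H) (Tt g)
      = pinner (Γ1 f) (Γt0 g) - pinner (Γ0 f) (Γt1 g)
  surj_Γ0 : Function.Surjective Γ0
  surj_Γt0 : Function.Surjective Γt0
  A0_adjoint : (T.restrictTo (LinearMap.ker Γ0)).adjoint = Tt.restrictTo (LinearMap.ker Γt0)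
  At0_adjoint : (Tt.restrictTo (LinearMap.ker Γt0)).adjoint = T.restrictTo (LinearMap.ker Γ0)

lemma dense_range_prodMk_of_dense_map_ker {R M N P : Type*} [Semiring R]
    [AddCommMonoid M] [Module R M] [AddCommMonoid N] [Module R N] [TopologicalSpace N]
    [AddCommGroup P] [Module R P] [TopologicalSpace P] [ContinuousAdd P]
    {φ : M →ₗ[R] N} {ψ : M →ₗ[R] P} (hφ : DenseRange φ)
    (hψ : Dense ((LinearMap.ker φ).map ψ : Set P)) :
    Dense (Set.range fun x => (φ x, ψ x)) := by
  suffices fibres_subset :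
      Set.range φ ×ˢ Set.univ ⊆ closure (Set.range fun x => (φ x, ψ x)) from
    ((Dense.prod hφ dense_univ).mono fibres_subset).of_closure
  rintro ⟨_, p⟩ ⟨⟨x, rfl⟩, -⟩
  have translate_mapsTo : Set.MapsTo (fun q => (φ x, ψ x + q)) ((LinearMap.ker φ).map ψ : Set P)
      (Set.range fun x => (φ x, ψ x)) := by
    rintro _ ⟨k, hk, rfl⟩
    exact ⟨x + k, by simp only [map_add, LinearMap.mem_ker.1 hk, add_zero]⟩
  have := map_mem_closure (by fun_prop) (hψ (-ψ x + p)) translate_mapsTo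
  rwa [add_neg_cancel_left] at this

lemma pinner_conj_symm {E : Type*} [NormedAddCommGroup E] [InnerProductSpace ℂ E] (x y : E) :
    (starRingEnd ℂ) (pinner x y) = pinner y x :=
  inner_conj_symm _ _

section RestrictTo

variable {E : Type*} [NormedAddCommGroup E] [InnerProductSpace ℂ E]
  {T : E →ₗ.[ℂ] E} {p : Submodule ℂ T.domain}

lemma mem_restrictTo_domain {f : T.domain} : (f : E) ∈ (T.restrictTo p).domain ↔ f ∈ p :=
  T.domain.injective_subtype.mem_set_image

lemma restrictTo_apply {f : T.domain} (hf : f ∈ p) :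
    T.restrictTo p ⟨f, mem_restrictTo_domain.2 hf⟩ = T f :=
  congrArg (fun x : p => T x) <|
    (Submodule.equivMapOfInjective T.domain.subtype T.domain.injective_subtype p).symm_apply_apply
      ⟨f, hf⟩

lemma mem_adjoint_restrictTo_domain [CompleteSpace E] {g w : E}
    (h : ∀ f ∈ p, pinner (T f) g = pinner (f : E) w) :
    g ∈ (T.restrictTo p).adjoint.domain := by
  refine LinearPMap.mem_adjoint_domain_of_exists _ ⟨w, ?_⟩
  rintro ⟨_, f, hf, rfl⟩
  exact (h f hf).symm.trans (congrArg (pinner · g) (restrictTo_apply hf).symm)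

end RestrictTo

/-- The abstract Green identity, which relates a pair of operators `T`, `Tt` to the boundary maps
`Γ0`, `Γ1` on `dom T` and `Γt0`, `Γt1` on `dom Tt`. Both sides are arguments, so that
exchanging them is again an instance of the notion. -/
def GreenIdentity {E F : Type*} [NormedAddCommGroup E] [InnerProductSpace ℂ E]
    [NormedAddCommGroup F] [InnerProductSpace ℂ F] (T Tt : E →ₗ.[ℂ] E)
    (Γ0 Γ1 : T.domain →ₗ[ℂ] F) (Γt0 Γt1 : Tt.domain →ₗ[ℂ] F) : Prop :=
  ∀ (f : T.domain) (g : Tt.domain),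
    pinner (T f) (g : E) - pinner (f : E) (Tt g) = pinner (Γ1 f) (Γt0 g) - pinner (Γ0 f) (Γt1 g)

namespace GreenIdentity

variable {E F : Type*} [NormedAddCommGroup E] [InnerProductSpace ℂ E]
  [NormedAddCommGroup F] [InnerProductSpace ℂ F] {T Tt : E →ₗ.[ℂ] E}
  {Γ0 Γ1 : T.domain →ₗ[ℂ] F} {Γt0 Γt1 : Tt.domain →ₗ[ℂ] F}

lemma symm (h : GreenIdentity T Tt Γ0 Γ1 Γt0 Γt1) : GreenIdentity Tt T Γt0 Γt1 Γ0 Γ1 := by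
  intro g f
  have conj_green := congrArg (starRingEnd ℂ) (h f g)
  simp only [map_sub, pinner_conj_symm] at conj_green
  linear_combination -conj_green

lemma pinner_sub_of_mem_ker (h : GreenIdentity T Tt Γ0 Γ1 Γt0 Γt1) {f : T.domain}
    (hf : f ∈ LinearMap.ker Γ0) (g : Tt.domain) :
    pinner (T f) (g : E) - pinner (f : E) (Tt g) = pinner (Γ1 f) (Γt0 g) := by
  rw [h f g, LinearMap.mem_ker.1 hf, sub_eq_self]
  exact inner_zero_right _

lemma dense_map_ker [CompleteSpace E] [CompleteSpace F] (h : GreenIdentity T Tt Γ0 Γ1 Γt0 Γt1)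
    (hΓt0 : Function.Surjective Γt0)
    (hA0 : (T.restrictTo (LinearMap.ker Γ0)).adjoint.domain ≤
      (Tt.restrictTo (LinearMap.ker Γt0)).domain) :
    Dense ((LinearMap.ker Γ0).map Γ1 : Set F) := by
  rw [Submodule.dense_iff_topologicalClosure_eq_top, Submodule.topologicalClosure_eq_top_iff,
    Submodule.eq_bot_iff]
  intro b hb
  obtain ⟨g, rfl⟩ := hΓt0 b
  have hg : (g : E) ∈ (T.restrictTo (LinearMap.ker Γ0)).adjoint.domain := by
    refine mem_adjoint_restrictTo_domain (w := Tt g) fun f hf => sub_eq_zero.1 ?_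
    rw [h.pinner_sub_of_mem_ker hf]
    exact (Submodule.mem_orthogonal' _ _).1 hb _ (Submodule.mem_map_of_mem hf)
  exact mem_restrictTo_domain.1 (hA0 hg)

end GreenIdentity

theorem stmt2_general {T Tt : H →ₗ.[ℂ] H}
    {Γ0 Γ1 : T.domain →ₗ[ℂ] G} {Γt0 Γt1 : Tt.domain →ₗ[ℂ] G}
    (hgreen : GreenIdentity T Tt Γ0 Γ1 Γt0 Γt1)
    (hΓ0 : DenseRange Γ0) (hΓt0 : Function.Surjective Γt0)
    (hA0 : (T.restrictTo (LinearMap.ker Γ0)).adjoint.domain ≤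
      (Tt.restrictTo (LinearMap.ker Γt0)).domain) :
    Dense (Set.range (fun f : T.domain => (Γ0 f, Γ1 f)) : Set (G × G)) :=
  dense_range_prodMk_of_dense_map_ker hΓ0 (hgreen.dense_map_ker hΓt0 hA0)

theorem stmt2
    (S St T Tt : H →ₗ.[ℂ] H)
    (Γ0 Γ1 : T.domain →ₗ[ℂ] G) (Γt0 Γt1 : Tt.domain →ₗ[ℂ] G)
    (hgbt : IsGeneralizedBoundaryTriple S St T Tt Γ0 Γ1 Γt0 Γt1)
    :
    Dense (Set.range (fun f : T.domain => (Γ0 f, Γ1 f)) : Set (G × G)) ∧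
    Dense (Set.range (fun g : Tt.domain => (Γt0 g, Γt1 g)) : Set (G × G)) := by
  have hgreen : GreenIdentity T Tt Γ0 Γ1 Γt0 Γt1 := hgbt.green
  exact ⟨stmt2_general hgreen hgbt.surj_Γ0.denseRange hgbt.surj_Γt0 hgbt.A0_adjoint.le.1,
    stmt2_general hgreen.symm hgbt.surj_Γt0.denseRange hgbt.surj_Γ0 hgbt.At0_adjoint.le.1⟩

end
end

section
/- Let {G, (Γ0, Γ1), (Γ̃0, Γ̃1)} be a generalized boundary triple for the adjoint pair {S, S̃} with core {T, T̃} of {S*, S̃*}, assume ρ(A0) ≠ ∅, and let M, M̃ be the associated Weyl functions. Then for every λ ∈ ρ(A0) the Weyl function value M(λ) is an everywhere defined bounded operator in G, i.e., there exists C ≥ 0 such that ‖Γ1 f‖_G ≤ C ‖Γ0 f‖_G for all f ∈ ker(T − λ), and M(λ) Γ0 fλ = Γ1 fλ for every fλ ∈ dom T with T fλ = λ fλ. Analogously, for every μ ∈ ρ(Ã0), M̃(μ) is an everywhere defined bounded operator in G and M̃(μ) Γ̃0 gμ = Γ̃1 gμ for every gμ ∈ dom T̃ with T̃ gμ = μ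 gμ. -/
/-!
Boundedness of the Weyl function is a Hellinger–Toeplitz argument. For `f ∈ ker (T - λ)` and
`g ∈ ker (T̃ - λ̄)` Green's identity reduces to `(Γ1 f, Γ̃0 g) = (Γ0 f, Γ̃1 g)`. If `Ã0 - λ̄` is
onto, any `g₀ ∈ dom T̃` can be moved into `ker (T̃ - λ̄)` by an element of `ker Γ̃0`, so `Γ̃0` maps
`ker (T̃ - λ̄)` onto `G`. Hence every functional on `G` is bounded by a multiple of `‖Γ0 f‖` at
the vectors `Γ1 f`, and the uniform boundedness principle makes the constant uniform. For
`λ ∈ ρ(A0)` the operator `Ã0 - λ̄ = (A0 - λ)*` is onto because the adjoint of the resolvent is a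
right inverse. The claims about `M̃` follow by exchanging the roles of the two operators.
-/

open scoped ComplexInnerProductSpace

noncomputable section

variable {H G : Type*}
  [NormedAddCommGroup H] [InnerProductSpace ℂ H] [CompleteSpace H]
  [NormedAddCommGroup G] [InnerProductSpace ℂ G] [CompleteSpace G]

section Adjoint

open scoped ComplexConjugate InnerProductSpace LinearPMap

variable {𝕜 E F : Type*} [RCLike 𝕜] [NormedAddCommGroup E] [InnerProductSpace 𝕜 E] [CompleteSpace E]
  [NormedAddCommGroup F] [InnerProductSpace 𝕜 F]

theorem adjoint_domain_le_of_le {A B : E →ₗ.[𝕜] F} (hAB : A ≤ B) : B†.domain ≤ A†.domain := by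
  intro y hy
  rw [LinearPMap.mem_adjoint_domain_iff] at hy ⊢
  refine (hy.comp (continuous_inclusion hAB.1)).congr fun x => ?_
  exact congrArg (inner 𝕜 y) (LinearPMap.apply_comp_inclusion hAB x).symm

theorem exists_adjoint_sub_conj_smul_eq_of_leftInverse {A : E →ₗ.[𝕜] E}
    (hA : Dense (A.domain : Set E)) {lam : 𝕜} {R : E →L[𝕜] E}
    (hR : ∀ x : A.domain, R (A x - lam • (x : E)) = x) (k : E) :
    ∃ x : A†.domain, A† x - conj lam • (x : E) = k := by
  have inner_eq (x : A.domain) :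
      ⟪k + conj lam • R.adjoint k, (x : E)⟫_𝕜 = ⟪R.adjoint k, A x⟫_𝕜 :=
    calc ⟪k + conj lam • R.adjoint k, (x : E)⟫_𝕜
        = ⟪k, R (A x - lam • (x : E))⟫_𝕜 + lam * ⟪R.adjoint k, (x : E)⟫_𝕜 := by
          rw [hR, inner_add_left, inner_smul_left, RCLike.conj_conj]
      _ = ⟪R.adjoint k, A x⟫_𝕜 := by
          rw [← ContinuousLinearMap.adjoint_inner_left, inner_sub_right, inner_smul_right,
            sub_add_cancel]
  let x : A†.domain := ⟨R.adjoint k, LinearPMap.mem_adjoint_domain_of_exists _ ⟨_, inner_eq⟩⟩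
  exact ⟨x, by rw [LinearPMap.adjoint_apply_eq hA x inner_eq, add_sub_cancel_right]⟩

end Adjoint

omit [CompleteSpace H] in
theorem exists_mem_apply_eq_restrictTo_apply (T : H →ₗ.[ℂ] H) (p : Submodule ℂ T.domain)
    (x : (T.restrictTo p).domain) :
    ∃ y : T.domain, y ∈ p ∧ (y : H) = x ∧ T y = T.restrictTo p x := by
  let e := Submodule.equivMapOfInjective T.domain.subtype (Submodule.injective_subtype _) p
  exact ⟨e.symm x, (e.symm x).2, congrArg Subtype.val (e.apply_symm_apply x), rfl⟩

omit [CompleteSpace H] in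
theorem restrictTo_le (T : H →ₗ.[ℂ] H) (p : Submodule ℂ T.domain) : T.restrictTo p ≤ T := by
  refine ⟨Submodule.map_subtype_le T.domain p, fun x z hxz => ?_⟩
  obtain ⟨y, -, hyx, hTy⟩ := exists_mem_apply_eq_restrictTo_apply T p x
  rw [← hTy, Subtype.ext (hyx.trans hxz)]

namespace IsGeneralizedBoundaryTriple

open scoped ComplexConjugate

variable {S St T Tt : H →ₗ.[ℂ] H} {Γ0 Γ1 : T.domain →ₗ[ℂ] G} {Γt0 Γt1 : Tt.domain →ₗ[ℂ] G}

omit [CompleteSpace G] in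
theorem symm (h : IsGeneralizedBoundaryTriple S St T Tt Γ0 Γ1 Γt0 Γt1) :
    IsGeneralizedBoundaryTriple St S Tt T Γt0 Γt1 Γ0 Γ1 where
  dense_S := h.dense_St
  dense_St := h.dense_S
  closed_S := h.closed_St
  closed_St := h.closed_S
  adjoint_pair f g := by
    have conj_pair := congrArg conj (h.adjoint_pair g f)
    simp only [pinner, inner_conj_symm] at conj_pair ⊢
    exact conj_pair.symm
  T_le := h.Tt_le
  Tt_le := h.T_le
  T_adjoint := h.Tt_adjoint
  Tt_adjoint := h.T_adjoint
  green f g := by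
    have conj_green := congrArg conj (h.green g f)
    simp only [pinner, map_sub, inner_conj_symm] at conj_green ⊢
    linear_combination -conj_green
  surj_Γ0 := h.surj_Γt0
  surj_Γt0 := h.surj_Γ0
  A0_adjoint := h.At0_adjoint
  At0_adjoint := h.A0_adjoint

omit [CompleteSpace G] in
theorem dense_domain_restrictTo_ker (h : IsGeneralizedBoundaryTriple S St T Tt Γ0 Γ1 Γt0 Γt1) :
    Dense ((T.restrictTo (LinearMap.ker Γ0)).domain : Set H) := by
  -- `S̃ = T̃* ⊆ Ã0* = A0`
  have adjoint_le := adjoint_domain_le_of_le (restrictTo_le Tt (LinearMap.ker Γt0))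
  rw [h.Tt_adjoint, h.At0_adjoint] at adjoint_le
  exact h.dense_St.mono adjoint_le

omit [CompleteSpace G] in
theorem exists_boundary_eq_zero_and_sub_conj_smul_eq
    (h : IsGeneralizedBoundaryTriple S St T Tt Γ0 Γ1 Γt0 Γt1) {lam : ℂ}
    (hlam : InResolventSet (T.restrictTo (LinearMap.ker Γ0)) lam) (k : H) :
    ∃ g : Tt.domain, Γt0 g = 0 ∧ Tt g - conj lam • (g : H) = k := by
  obtain ⟨R, hR⟩ := hlam
  have surj_adjoint :=
    exists_adjoint_sub_conj_smul_eq_of_leftInverse h.dense_domain_restrictTo_ker hR.1 k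
  rw [h.A0_adjoint] at surj_adjoint
  obtain ⟨x, hx⟩ := surj_adjoint
  obtain ⟨g, hg, hgx, hTg⟩ := exists_mem_apply_eq_restrictTo_apply Tt _ x
  exact ⟨g, hg, by rw [hTg, hgx, hx]⟩

end IsGeneralizedBoundaryTriple

section GreenIdentity

open scoped ComplexConjugate InnerProductSpace

theorem exists_norm_le_mul_of_forall_exists_norm_apply_le {𝕜 ι E F : Type*} [RCLike 𝕜]
    [NormedAddCommGroup E] [NormedSpace 𝕜 E] [CompleteSpace E]
    [NormedAddCommGroup F] [NormedSpace 𝕜 F] {φ : ι → E →L[𝕜] F} {r : ι → ℝ}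
    (hr : ∀ i, 0 ≤ r i) (hφ : ∀ x, ∃ C, ∀ i, ‖φ i x‖ ≤ C * r i) :
    ∃ C, 0 ≤ C ∧ ∀ i, ‖φ i‖ ≤ C * r i := by
  have norm_inv_r (i : ι) : ‖(r i : 𝕜)⁻¹‖ = (r i)⁻¹ := by
    rw [norm_inv, RCLike.norm_of_nonneg (hr i)]
  obtain ⟨C, hC⟩ : ∃ C, ∀ i, ‖(r i : 𝕜)⁻¹ • φ i‖ ≤ C := by
    refine banach_steinhaus fun x => ?_
    obtain ⟨C, hC⟩ := hφ x
    refine ⟨|C|, fun i => ?_⟩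
    rw [smul_apply, norm_smul, norm_inv_r, inv_mul_eq_div]
    exact div_le_of_le_mul₀ (hr i) (abs_nonneg C)
      ((hC i).trans (mul_le_mul_of_nonneg_right (le_abs_self C) (hr i)))
  refine ⟨|C|, abs_nonneg C, fun i => ?_⟩
  rcases (hr i).eq_or_lt with hi | hi
  · have hφi : φ i = 0 := by
      ext x
      obtain ⟨C', hC'⟩ := hφ x
      simpa [← hi] using hC' i
    simp [hφi, ← hi]
  · rw [← div_le_iff₀ hi, ← inv_mul_eq_div, ← norm_inv_r, ← norm_smul]
    exact (hC i).trans (le_abs_self C)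

theorem exists_apply_eq_smul_and_boundary_eq {R E V : Type*} [Ring R] [AddCommGroup E] [Module R E]
    [AddCommGroup V] [Module R V] {A : E →ₗ.[R] E} {Γ : A.domain →ₗ[R] V} {μ : R}
    (hΓ : Function.Surjective Γ)
    (hA : ∀ k : E, ∃ g : A.domain, Γ g = 0 ∧ A g - μ • (g : E) = k) (ψ : V) :
    ∃ g : A.domain, A g = μ • (g : E) ∧ Γ g = ψ := by
  obtain ⟨g₀, rfl⟩ := hΓ ψ
  obtain ⟨g₁, hΓg₁, hg₁⟩ := hA (A g₀ - μ • (g₀ : E))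
  refine ⟨g₀ - g₁, ?_, by rw [map_sub, hΓg₁, sub_zero]⟩
  rw [LinearPMap.map_sub, Submodule.coe_sub, smul_sub, sub_eq_sub_iff_sub_eq_sub]
  exact hg₁.symm

variable {𝕜 E K L : Type*} [RCLike 𝕜] [NormedAddCommGroup E] [InnerProductSpace 𝕜 E]
  [NormedAddCommGroup K] [InnerProductSpace 𝕜 K] [NormedAddCommGroup L] [InnerProductSpace 𝕜 L]

theorem inner_boundary_eq_of_apply_eq_smul {T Tt : E →ₗ.[𝕜] E}
    {Γ0 : T.domain →ₗ[𝕜] K} {Γ1 : T.domain →ₗ[𝕜] L}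
    {Γt0 : Tt.domain →ₗ[𝕜] L} {Γt1 : Tt.domain →ₗ[𝕜] K}
    (green : ∀ (f : T.domain) (g : Tt.domain),
      ⟪(g : E), T f⟫_𝕜 - ⟪Tt g, (f : E)⟫_𝕜 = ⟪Γt0 g, Γ1 f⟫_𝕜 - ⟪Γt1 g, Γ0 f⟫_𝕜)
    {lam : 𝕜} {f : T.domain} {g : Tt.domain}
    (hf : T f = lam • (f : E)) (hg : Tt g = conj lam • (g : E)) :
    ⟪Γt0 g, Γ1 f⟫_𝕜 = ⟪Γt1 g, Γ0 f⟫_𝕜 := by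
  rw [← sub_eq_zero, ← green, hf, hg, inner_smul_left, inner_smul_right, RCLike.conj_conj, sub_self]

theorem stmt9_general [CompleteSpace L] {T Tt : E →ₗ.[𝕜] E}
    {Γ0 : T.domain →ₗ[𝕜] K} {Γ1 : T.domain →ₗ[𝕜] L}
    {Γt0 : Tt.domain →ₗ[𝕜] L} {Γt1 : Tt.domain →ₗ[𝕜] K}
    (green : ∀ (f : T.domain) (g : Tt.domain),
      ⟪(g : E), T f⟫_𝕜 - ⟪Tt g, (f : E)⟫_𝕜 = ⟪Γt0 g, Γ1 f⟫_𝕜 - ⟪Γt1 g, Γ0 f⟫_𝕜)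
    (surj_Γt0 : Function.Surjective Γt0) {lam : 𝕜}
    (surj_sub : ∀ k : E, ∃ g : Tt.domain, Γt0 g = 0 ∧ Tt g - conj lam • (g : E) = k) :
    (∃ C : ℝ, 0 ≤ C ∧ ∀ f : T.domain, T f = lam • (f : E) → ‖Γ1 f‖ ≤ C * ‖Γ0 f‖) ∧
      (∀ f f' : T.domain, T f = lam • (f : E) → T f' = lam • (f' : E) →
        Γ0 f = Γ0 f' → Γ1 f = Γ1 f') := by
  have exists_inner_eq (ψ : L) :
      ∃ χ : K, ∀ f : T.domain, T f = lam • (f : E) → ⟪ψ, Γ1 f⟫_𝕜 = ⟪χ, Γ0 f⟫_𝕜 := by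
    obtain ⟨g, hg, rfl⟩ := exists_apply_eq_smul_and_boundary_eq surj_Γt0 surj_sub ψ
    exact ⟨Γt1 g, fun f hf => inner_boundary_eq_of_apply_eq_smul green hf hg⟩
  constructor
  · obtain ⟨C, hC₀, hC⟩ := exists_norm_le_mul_of_forall_exists_norm_apply_le
      (φ := fun f : {f : T.domain // T f = lam • (f : E)} => innerSL 𝕜 (Γ1 f))
      (r := fun f => ‖Γ0 f‖) (fun _ => norm_nonneg _) fun ψ => by
        obtain ⟨χ, hχ⟩ := exists_inner_eq ψ
        refine ⟨‖χ‖, fun f => ?_⟩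
        rw [innerSL_apply_apply, norm_inner_symm, hχ f f.2]
        exact norm_inner_le_norm _ _
    exact ⟨C, hC₀, fun f hf => by simpa only [innerSL_apply_norm] using hC ⟨f, hf⟩⟩
  · intro f f' hf hf' h0
    refine ext_inner_left 𝕜 fun ψ => ?_
    obtain ⟨χ, hχ⟩ := exists_inner_eq ψ
    rw [hχ f hf, hχ f' hf', h0]

end GreenIdentity

theorem stmt9
    (S St T Tt : H →ₗ.[ℂ] H)
    (Γ0 Γ1 : T.domain →ₗ[ℂ] G) (Γt0 Γt1 : Tt.domain →ₗ[ℂ] G)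
    (hgbt : IsGeneralizedBoundaryTriple S St T Tt Γ0 Γ1 Γt0 Γt1)
    (lam mu : ℂ)
    (hlam : InResolventSet (T.restrictTo (LinearMap.ker Γ0)) lam)
    (hmu : InResolventSet (Tt.restrictTo (LinearMap.ker Γt0)) mu) :
    ((∃ C : ℝ, 0 ≤ C ∧ ∀ f : T.domain, T f = lam • (f : H) → ‖Γ1 f‖ ≤ C * ‖Γ0 f‖) ∧
      (∀ f f' : T.domain, T f = lam • (f : H) → T f' = lam • (f' : H) →
        Γ0 f = Γ0 f' → Γ1 f = Γ1 f')) ∧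
    ((∃ C : ℝ, 0 ≤ C ∧ ∀ g : Tt.domain, Tt g = mu • (g : H) → ‖Γt1 g‖ ≤ C * ‖Γt0 g‖) ∧
      (∀ g g' : Tt.domain, Tt g = mu • (g : H) → Tt g' = mu • (g' : H) →
        Γt0 g = Γt0 g' → Γt1 g = Γt1 g')) := by
  exact ⟨stmt9_general hgbt.green hgbt.surj_Γt0
      (hgbt.exists_boundary_eq_zero_and_sub_conj_smul_eq hlam),
    stmt9_general hgbt.symm.green hgbt.surj_Γ0
      (hgbt.symm.exists_boundary_eq_zero_and_sub_conj_smul_eq hmu)⟩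

end
end
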